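/- For general points: ℓ(L(10, 2, 6^3)) = 2 while v(L(10, 2, 6^3)) = −1, and ℓ(L(24, 16, 6^9)) = 0 while v(L(24, 16, 6^9)) = −1; in particular both systems are special. -/

import Mathlib

open MvPolynomial

/-- The iterated partial derivative corresponding to the multi-index `ν`. -/
noncomputable def mderiv (ν : Fin 3 → ℕ) :
    MvPolynomial (Fin 3) ℂ →ₗ[ℂ] MvPolynomial (Fin 3) ℂ :=
  ((pderiv (R := ℂ) (0 : Fin 3)).toLinearMap ^ ν 0) ∘ₗ
  ((pderiv (R := ℂ) (1 : Fin 3)).toLinearMap ^ ν 1) ∘ₗ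
  ((pderiv (R := ℂ) (2 : Fin 3)).toLinearMap ^ ν 2)

/-- The linear system `L(d; m)` of homogeneous forms of degree `d` in three variables
all of whose partial derivatives of order `< m i` vanish at the point `p i`,
i.e. plane curves of degree `d` with multiplicity at least `m i` at `p i`. -/
noncomputable def linSys {k : ℕ} (p : Fin k → Fin 3 → ℂ) (d : ℕ) (m : Fin k → ℕ) :
    Submodule ℂ (MvPolynomial (Fin 3) ℂ) :=
  (homogeneousSubmodule (Fin 3) ℂ d) ⊓
    ⨅ (i : Fin k), ⨅ (ν : Fin 3 → ℕ), ⨅ (_ : ν 0 + ν 1 + ν 2 < m i),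
      LinearMap.ker ((aeval (p i)).toLinearMap ∘ₗ mderiv ν)

/-- The projective dimension `ℓ` of the linear system (`-1` means empty). -/
noncomputable def projDim {k : ℕ} (p : Fin k → Fin 3 → ℂ) (d : ℕ) (m : Fin k → ℕ) : ℤ :=
  (Module.finrank ℂ (linSys p d m) : ℤ) - 1

/-- The virtual dimension `v = d(d+3)/2 - ∑ mᵢ(mᵢ+1)/2`. -/
def virtDim {k : ℕ} (d : ℕ) (m : Fin k → ℕ) : ℤ :=
  ((d : ℤ) * (d + 3)) / 2 - ∑ i : Fin k, ((m i : ℤ) * (m i + 1)) / 2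

/-- The quasi-homogeneous multiplicity vector `(m₀, 6, …, 6)` on `n + 1` points. -/
def qh (n m0 : ℕ) : Fin (n + 1) → ℕ := fun i => if i = 0 then m0 else 6

/-- A property `Q` of configurations of `k` points of `ℙ²` (given by nonzero homogeneous
coordinate vectors) holds for points in general position: there is a nonzero polynomial
in the coordinates such that `Q` holds whenever it does not vanish. -/
def Generically (k : ℕ) (Q : (Fin k → Fin 3 → ℂ) → Prop) : Prop :=
  ∃ P : MvPolynomial (Fin k × Fin 3) ℂ, P ≠ 0 ∧
    ∀ p : Fin k → Fin 3 → ℂ, (∀ i, p i ≠ 0) →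
      eval (fun x => p x.1 x.2) P ≠ 0 → Q p

theorem pderiv_comm_apply {σ R : Type*} [CommSemiring R] (i j : σ) (f : MvPolynomial σ R) :
    pderiv i (pderiv j f) = pderiv j (pderiv i f) := by
  classical
  induction f using MvPolynomial.induction_on' with
  | monomial e a =>
    rcases eq_or_ne i j with rfl | hij
    · rfl
    · simp only [pderiv_monomial, Finsupp.tsub_apply, Finsupp.single_apply, hij, hij.symm, if_false,
        tsub_zero]
      rw [tsub_right_comm, mul_right_comm]
  | add f g hf hg => simp only [map_add, hf, hg]

theorem pderiv_pow_apply_pderiv {σ R : Type*} [CommSemiring R] (i j : σ) (n : ℕ)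
    (f : MvPolynomial σ R) :
    ((pderiv (R := R) i).toLinearMap ^ n) (pderiv j f) =
      pderiv j (((pderiv (R := R) i).toLinearMap ^ n) f) := by
  have h : Commute ((pderiv (R := R) i).toLinearMap) ((pderiv (R := R) j).toLinearMap) :=
    LinearMap.ext fun g => pderiv_comm_apply i j g
  exact LinearMap.congr_fun (h.pow_left n).eq f

theorem mderiv_add_single (ν : Fin 3 → ℕ) (i : Fin 3) (f : MvPolynomial (Fin 3) ℂ) :
    mderiv (ν + Pi.single i 1) f = mderiv ν (pderiv i f) := by
  fin_cases i <;>
    simp [mderiv, pow_succ, pderiv_pow_apply_pderiv]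

theorem mderiv_add_single' (ν : Fin 3 → ℕ) (i : Fin 3) (f : MvPolynomial (Fin 3) ℂ) :
    mderiv (ν + Pi.single i 1) f = pderiv i (mderiv ν f) := by
  rw [mderiv_add_single]
  simp [mderiv, pderiv_pow_apply_pderiv]

@[simp]
theorem mderiv_zero (f : MvPolynomial (Fin 3) ℂ) : mderiv 0 f = f := by
  simp [mderiv]

theorem multiIndex_induction {motive : (Fin 3 → ℕ) → Prop} (zero : motive 0)
    (add_single : ∀ ν i, motive ν → motive (ν + Pi.single i 1)) (ν : Fin 3 → ℕ) : motive ν := by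
  obtain ⟨n, hn⟩ : ∃ n, n = ν 0 + ν 1 + ν 2 := ⟨_, rfl⟩
  induction n generalizing ν with
  | zero =>
    convert zero
    ext i
    fin_cases i <;> simp <;> omega
  | succ n ih =>
    obtain ⟨i, hi⟩ : ∃ i, ν i ≠ 0 := by
      by_contra! h
      simp [h] at hn
    have hle : Pi.single i 1 ≤ ν := by
      intro j
      rcases eq_or_ne j i with rfl | h
      · simpa using Nat.one_le_iff_ne_zero.2 hi
      · simp [h]
    rw [← tsub_add_cancel_of_le hle]
    refine add_single _ _ (ih _ ?_)
    fin_cases i <;> simp at hi ⊢ <;> omega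

theorem mderiv_isHomogeneous {d : ℕ} {f : MvPolynomial (Fin 3) ℂ} (hf : f.IsHomogeneous d)
    (ν : Fin 3 → ℕ) : (mderiv ν f).IsHomogeneous (d - (ν 0 + ν 1 + ν 2)) := by
  induction ν using multiIndex_induction with
  | zero => simpa
  | add_single ν i ih =>
    rw [mderiv_add_single']
    convert ih.pderiv (i := i) using 1
    fin_cases i <;> simp <;> omega

/-- All partial derivatives of `f` of order `< m` vanish at `p`. -/
def VanishesTo (p : Fin 3 → ℂ) : ℕ → MvPolynomial (Fin 3) ℂ → Prop
  | 0, _ => True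
  | m + 1, f => eval p f = 0 ∧ ∀ i, VanishesTo p m (pderiv i f)

namespace VanishesTo

variable {p : Fin 3 → ℂ} {m n : ℕ} {f g : MvPolynomial (Fin 3) ℂ}

theorem of_succ (h : VanishesTo p (m + 1) f) : VanishesTo p m f := by
  induction m generalizing f with
  | zero => trivial
  | succ m ih => exact ⟨h.1, fun i => ih (h.2 i)⟩

theorem add (hf : VanishesTo p m f) (hg : VanishesTo p m g) : VanishesTo p m (f + g) := by
  induction m generalizing f g with
  | zero => trivial
  | succ m ih =>
    refine ⟨by simp [hf.1, hg.1], fun i => ?_⟩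
    rw [map_add]
    exact ih (hf.2 i) (hg.2 i)

theorem mul (hf : VanishesTo p m f) (hg : VanishesTo p n g) : VanishesTo p (m + n) (f * g) := by
  induction h : m + n generalizing m n f g with
  | zero => trivial
  | succ k ih =>
    refine ⟨?_, fun i => ?_⟩
    · rcases m with _ | m
      · obtain rfl : n = k + 1 := by omega
        simp [hg.1]
      · simp [hf.1]
    · rw [pderiv_mul]
      refine add ?_ ?_
      · rcases m with _ | m
        · obtain rfl : n = k + 1 := by omega
          exact ih (m := 0) trivial hg.of_succ (by omega : 0 + k = k)
        · exact ih (hf.2 i) hg (by omega)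
      · rcases n with _ | n
        · obtain rfl : m = k + 1 := by omega
          exact ih (n := 0) hf.of_succ trivial (by omega : k + 0 = k)
        · exact ih hf (hg.2 i) (by omega)

theorem iff_mderiv :
    VanishesTo p m f ↔ ∀ ν : Fin 3 → ℕ, ν 0 + ν 1 + ν 2 < m → eval p (mderiv ν f) = 0 := by
  induction m generalizing f with
  | zero => simp [VanishesTo]
  | succ m ih =>
    simp only [VanishesTo, ih, ← mderiv_add_single]
    constructor
    · rintro ⟨h0, h⟩ ν hν
      induction ν using multiIndex_induction with
      | zero => simpa
      | add_single ν i _ =>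
        refine h i ν ?_
        fin_cases i <;> simp at hν <;> omega
    · intro h
      refine ⟨by simpa using h 0 (by simp), fun i ν hν => h _ ?_⟩
      fin_cases i <;> simp <;> omega

end VanishesTo

theorem mem_linSys {k : ℕ} {p : Fin k → Fin 3 → ℂ} {d : ℕ} {m : Fin k → ℕ}
    {f : MvPolynomial (Fin 3) ℂ} :
    f ∈ linSys p d m ↔ f.IsHomogeneous d ∧ ∀ i, ∀ ν : Fin 3 → ℕ, ν 0 + ν 1 + ν 2 < m i →
      eval (p i) (mderiv ν f) = 0 := by
  simp [linSys, Submodule.mem_iInf, aeval_eq_eval]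

theorem mul_mem_linSys {k : ℕ} {p : Fin k → Fin 3 → ℂ} {d e : ℕ} {m n : Fin k → ℕ}
    {f g : MvPolynomial (Fin 3) ℂ} (hf : f ∈ linSys p d m) (hg : g ∈ linSys p e n) :
    f * g ∈ linSys p (d + e) (m + n) := by
  simp only [mem_linSys, ← VanishesTo.iff_mderiv] at *
  exact ⟨hf.1.mul hg.1, fun i => (hf.2 i).mul (hg.2 i)⟩

instance (d : ℕ) : FiniteDimensional ℂ (homogeneousSubmodule (Fin 3) ℂ d) :=
  Module.Finite.iff_fg.2 (homogeneousSubmodule_fg _ _ d)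

theorem linSys_le {k : ℕ} (p : Fin k → Fin 3 → ℂ) (d : ℕ) (m : Fin k → ℕ) :
    linSys p d m ≤ homogeneousSubmodule (Fin 3) ℂ d := inf_le_left

instance {k : ℕ} (p : Fin k → Fin 3 → ℂ) (d : ℕ) (m : Fin k → ℕ) :
    FiniteDimensional ℂ (linSys p d m) :=
  Submodule.finiteDimensional_of_le (linSys_le p d m)

theorem finrank_homogeneousSubmodule_ge (d : ℕ) :
    Nat.multichoose 3 d ≤ Module.finrank ℂ (homogeneousSubmodule (Fin 3) ℂ d) := by
  let v : Sym (Fin 3) d → homogeneousSubmodule (Fin 3) ℂ d := fun s =>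
    ⟨monomial (Multiset.toFinsupp (s : Multiset (Fin 3))) 1,
      isHomogeneous_monomial _ (by
        simp [Finsupp.degree_eq_sum, Multiset.toFinsupp_apply])⟩
  have hv : LinearIndependent ℂ v := by
    refine LinearIndependent.of_comp (homogeneousSubmodule (Fin 3) ℂ d).subtype ?_
    have := (basisMonomials (Fin 3) ℂ).linearIndependent.comp
      (fun s : Sym (Fin 3) d => Multiset.toFinsupp (s : Multiset (Fin 3)))
      (Multiset.toFinsupp.injective.comp Sym.coe_injective)
    rw [coe_basisMonomials] at this
    exact this
  simpa [Sym.card_sym_eq_multichoose] using hv.fintype_card_le_finrank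

/-- The multi-indices of order exactly `m - 1` (none if `m = 0`). -/
def topIndices (m : ℕ) : Finset (Fin 3 → ℕ) :=
  {ν ∈ Fintype.piFinset fun _ => Finset.range m | ν 0 + ν 1 + ν 2 + 1 = m}

theorem mem_topIndices {m : ℕ} {ν : Fin 3 → ℕ} :
    ν ∈ topIndices m ↔ ν 0 + ν 1 + ν 2 + 1 = m := by
  simp only [topIndices, Finset.mem_filter, Fintype.mem_piFinset, Finset.mem_range,
    and_iff_right_iff_imp]
  intro h i
  match i with
  | 0 => omega
  | 1 => omega
  | 2 => omega

theorem eval_mderiv_eq_zero_of_top {p : Fin 3 → ℂ} {d m : ℕ} (hm : m ≤ d + 1)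
    {f : MvPolynomial (Fin 3) ℂ} (hf : f.IsHomogeneous d)
    (h : ∀ ν ∈ topIndices m, eval p (mderiv ν f) = 0) (ν : Fin 3 → ℕ)
    (hν : ν 0 + ν 1 + ν 2 < m) : eval p (mderiv ν f) = 0 := by
  obtain ⟨k, hk⟩ : ∃ k, ν 0 + ν 1 + ν 2 + 1 + k = m :=
    ⟨m - (ν 0 + ν 1 + ν 2 + 1), by omega⟩
  induction k generalizing ν with
  | zero => exact h ν (mem_topIndices.2 hk)
  | succ k ih =>
    have euler := congrArg (eval p) (mderiv_isHomogeneous hf ν).sum_X_mul_pderiv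
    have step (i : Fin 3) : eval p (pderiv i (mderiv ν f)) = 0 := by
      rw [← mderiv_add_single']
      have hs : (ν + Pi.single i 1 : Fin 3 → ℕ) 0 + (ν + Pi.single i 1 : Fin 3 → ℕ) 1 +
          (ν + Pi.single i 1 : Fin 3 → ℕ) 2 =
          ν 0 + ν 1 + ν 2 + 1 := by
        fin_cases i <;> simp <;> omega
      exact ih _ (by omega) (by omega)
    simp only [map_sum, map_mul, eval_X, step, mul_zero, Finset.sum_const_zero, nsmul_eq_mul,
      map_natCast] at euler
    refine (mul_eq_zero.1 euler.symm).resolve_left ?_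
    exact Nat.cast_ne_zero.2 (by omega)

theorem finrank_linSys_ge {k : ℕ} (p : Fin k → Fin 3 → ℂ) (d : ℕ) (m : Fin k → ℕ)
    (hm : ∀ i, m i ≤ d + 1) :
    Nat.multichoose 3 d ≤ Module.finrank ℂ (linSys p d m) + ∑ i, (topIndices (m i)).card := by
  let Φ : homogeneousSubmodule (Fin 3) ℂ d →ₗ[ℂ] ((Σ i, topIndices (m i)) → ℂ) :=
    LinearMap.pi fun t =>
      ((aeval (p t.1)).toLinearMap ∘ₗ mderiv t.2) ∘ₗ (homogeneousSubmodule (Fin 3) ℂ d).subtype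
  have hker : (LinearMap.ker Φ).map (homogeneousSubmodule (Fin 3) ℂ d).subtype ≤
      linSys p d m := by
    rintro _ ⟨f, hf, rfl⟩
    refine mem_linSys.2 ⟨f.2, fun i => eval_mderiv_eq_zero_of_top (hm i) f.2 fun ν hν => ?_⟩
    simpa [Φ, aeval_eq_eval] using congrFun (LinearMap.mem_ker.1 hf) ⟨i, ν, hν⟩
  have h1 := Submodule.finrank_mono hker
  rw [Submodule.finrank_map_subtype_eq] at h1
  have h2 := Φ.finrank_range_add_finrank_ker
  have h3 := (LinearMap.range Φ).finrank_le
  simp only [Module.finrank_fintype_fun_eq_card, Fintype.card_sigma, Fintype.card_coe] at h3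
  have h4 := finrank_homogeneousSubmodule_ge d
  omega

theorem Generically.mono {k : ℕ} {Q Q' : (Fin k → Fin 3 → ℂ) → Prop} (h : Generically k Q)
    (hQ : ∀ p, Q p → Q' p) : Generically k Q' := by
  obtain ⟨P, hP, hPQ⟩ := h
  exact ⟨P, hP, fun p hp hne => hQ p (hPQ p hp hne)⟩

theorem Matrix.exists_mul_eq_one_of_mulVec_injective {K κ ι : Type*} [Field K] [Fintype κ]
    [Fintype ι] [DecidableEq κ] [DecidableEq ι] (A : Matrix κ ι K)
    (hA : Function.Injective A.mulVec) : ∃ L : Matrix ι κ K, L * A = 1 := by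
  obtain ⟨g, hg⟩ := (Matrix.toLin' A).exists_leftInverse_of_injective (LinearMap.ker_eq_bot.2 hA)
  refine ⟨LinearMap.toMatrix' g, ?_⟩
  rw [← LinearMap.toMatrix'_id, ← hg, LinearMap.toMatrix'_comp, LinearMap.toMatrix'_toLin']

theorem Matrix.mulVec_injective_of_det_mul_ne_zero {K κ ι : Type*} [Field K] [Fintype κ]
    [Fintype ι] [DecidableEq ι] (L : Matrix ι κ K) (A : Matrix κ ι K)
    (h : (L * A).det ≠ 0) : Function.Injective A.mulVec := by
  have := Matrix.mulVec_injective_of_det_ne_zero h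
  intro v w hvw
  refine this ?_
  rw [← Matrix.mulVec_mulVec, ← Matrix.mulVec_mulVec, hvw]

/-- Injectivity of a matrix depending polynomially on parameters is an open condition. -/
theorem MvPolynomial.exists_mulVec_injective_of_eval_ne_zero {σ K κ ι : Type*} [Field K]
    [Fintype κ] [Fintype ι] [DecidableEq κ] [DecidableEq ι] (A : Matrix κ ι (MvPolynomial σ K))
    (x₀ : σ → K) (h : Function.Injective (A.map (eval x₀)).mulVec) :
    ∃ P : MvPolynomial σ K, P ≠ 0 ∧
      ∀ x, eval x P ≠ 0 → Function.Injective (A.map (eval x)).mulVec := by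
  obtain ⟨L, hL⟩ := Matrix.exists_mul_eq_one_of_mulVec_injective _ h
  have key (x : σ → K) : eval x (L.map (C (σ := σ)) * A).det = (L * A.map (eval x)).det := by
    rw [RingHom.map_det, RingHom.mapMatrix_apply, Matrix.map_mul]
    congr 2
    ext i j
    simp
  refine ⟨(L.map (C (σ := σ)) * A).det, fun h0 => ?_, fun x hx => ?_⟩
  · have := key x₀
    rw [hL, h0] at this
    simp at this
  · rw [key] at hx
    exact Matrix.mulVec_injective_of_det_mul_ne_zero _ _ hx

/-- The multi-indices of order less than `m`. -/
def lowIndices (m : ℕ) : Finset (Fin 3 → ℕ) :=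
  {ν ∈ Fintype.piFinset fun _ => Finset.range m | ν 0 + ν 1 + ν 2 < m}

theorem mem_lowIndices {m : ℕ} {ν : Fin 3 → ℕ} :
    ν ∈ lowIndices m ↔ ν 0 + ν 1 + ν 2 < m := by
  simp only [lowIndices, Finset.mem_filter, Fintype.mem_piFinset, Finset.mem_range,
    and_iff_right_iff_imp]
  intro h i
  match i with
  | 0 => omega
  | 1 => omega
  | 2 => omega

/-- If at one configuration `r` linear conditions suffice to kill the linear system, then its
vector space dimension is at most `r` for points in general position. -/
theorem generically_finrank_linSys_le {k : ℕ} (d : ℕ) (m : Fin k → ℕ) (r : ℕ)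
    (p₀ : Fin k → Fin 3 → ℂ) (φ : MvPolynomial (Fin 3) ℂ →ₗ[ℂ] (Fin r → ℂ))
    (h : ∀ f ∈ linSys p₀ d m, φ f = 0 → f = 0) :
    Generically k fun p => Module.finrank ℂ (linSys p d m) ≤ r := by
  classical
  let b := Module.finBasis ℂ (homogeneousSubmodule (Fin 3) ℂ d)
  let A : Matrix ((Σ i, lowIndices (m i)) ⊕ Fin r) (Fin _) (MvPolynomial (Fin k × Fin 3) ℂ) :=
    fun t j => Sum.elim (fun t => rename (Prod.mk t.1) (mderiv t.2 (b j : MvPolynomial (Fin 3) ℂ)))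
      (fun s => C (φ (b j) s)) t
  have hA (p : Fin k → Fin 3 → ℂ) (c : Fin _ → ℂ) (f : MvPolynomial (Fin 3) ℂ)
      (hf : f = ∑ j, c j • (b j : MvPolynomial (Fin 3) ℂ)) :
      (A.map (eval fun x => p x.1 x.2)).mulVec c =
        Sum.elim (fun t => eval (p t.1) (mderiv t.2 f)) (φ f) := by
    ext t
    rcases t with t | s
    · rw [Sum.elim_inl, hf, map_sum, map_sum, Matrix.mulVec_apply_eq_sum]
      refine Finset.sum_congr rfl fun j _ => ?_
      rw [map_smul, smul_eval, mul_comm]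
      congr 1
      exact eval_rename_prod_mk _ _ _
    · rw [Sum.elim_inr, hf, map_sum, Finset.sum_apply, Matrix.mulVec_apply_eq_sum]
      refine Finset.sum_congr rfl fun j _ => ?_
      rw [map_smul, Pi.smul_apply, smul_eq_mul, mul_comm]
      congr 1
      exact eval_C _
  have repr (f : MvPolynomial (Fin 3) ℂ) (hf : f.IsHomogeneous d) :
      f = ∑ j, b.repr ⟨f, hf⟩ j • (b j : MvPolynomial (Fin 3) ℂ) := by
    have := (congrArg Subtype.val (b.sum_repr ⟨f, hf⟩)).symm
    rwa [Submodule.coe_sum] at this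
  have inj₀ : Function.Injective (A.map (eval fun x => p₀ x.1 x.2)).mulVec := by
    rw [← Matrix.coe_mulVecLin, ← LinearMap.ker_eq_bot, LinearMap.ker_eq_bot']
    intro c hc
    rw [Matrix.mulVecLin_apply, hA p₀ c _ rfl] at hc
    have hmem : (∑ j, c j • (b j : MvPolynomial (Fin 3) ℂ)) ∈ linSys p₀ d m := by
      refine mem_linSys.2 ⟨Submodule.sum_mem _ fun j _ => Submodule.smul_mem _ _ (b j).2,
        fun i ν hν => ?_⟩
      exact congrFun hc (Sum.inl ⟨i, ν, mem_lowIndices.2 hν⟩)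
    have h0 := h _ hmem (funext fun s => congrFun hc (Sum.inr s))
    have h1 : ∑ j, c j • b j = 0 := Subtype.ext (by simpa using h0)
    exact funext fun j => Fintype.linearIndependent_iff.1 b.linearIndependent c h1 j
  obtain ⟨P, hP, hinj⟩ := MvPolynomial.exists_mulVec_injective_of_eval_ne_zero A _ inj₀
  refine ⟨P, hP, fun p _ hp => ?_⟩
  have hφ : Function.Injective (φ ∘ₗ (linSys p d m).subtype) := by
    rw [← LinearMap.ker_eq_bot, LinearMap.ker_eq_bot']
    rintro ⟨f, hf⟩ hφf
    have hh := mem_linSys.1 hf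
    have h0 : (A.map (eval fun x => p x.1 x.2)).mulVec (b.repr ⟨f, hh.1⟩) = 0 := by
      rw [hA p _ f (repr f hh.1)]
      ext t
      rcases t with t | s
      · exact hh.2 t.1 t.2 (mem_lowIndices.1 t.2.2)
      · exact congrFun hφf s
    have h1 := hinj _ hp (h0.trans (Matrix.mulVec_zero _).symm)
    exact Subtype.ext ((repr f hh.1).trans (by simp [h1]))
  simpa using LinearMap.finrank_le_finrank_of_injective hφ

theorem mderiv_monomial (ν : Fin 3 → ℕ) (e : Fin 3 →₀ ℕ) (a : ℂ) (p : Fin 3 → ℂ) :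
    eval p (mderiv ν (monomial e a)) =
      a * ∏ i, ((e i).descFactorial (ν i) * p i ^ (e i - ν i)) := by
  have key (i : Fin 3) (n : ℕ) (e : Fin 3 →₀ ℕ) (a : ℂ) :
      ((pderiv (R := ℂ) i).toLinearMap ^ n) (monomial e a) =
        monomial (e - Finsupp.single i n) (a * (e i).descFactorial n) := by
    induction n with
    | zero => simp
    | succ n ih =>
      rw [pow_succ', Module.End.mul_apply, ih]
      rw [Derivation.coeFn_coe, pderiv_monomial, Nat.descFactorial_succ]
      congr 1
      · rw [tsub_tsub, ← Finsupp.single_add]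
      · simp
        ring
  simp only [mderiv, LinearMap.comp_apply, key, eval_monomial]
  rw [Finsupp.prod_fintype _ _ (by simp)]
  simp [Fin.prod_univ_three]
  ring

theorem eval_mderiv (ν : Fin 3 → ℕ) (f : MvPolynomial (Fin 3) ℂ) (p : Fin 3 → ℂ) :
    eval p (mderiv ν f) =
      ∑ e ∈ f.support, f.coeff e * ∏ i, ((e i).descFactorial (ν i) * p i ^ (e i - ν i)) := by
  conv_lhs => rw [f.as_sum]
  simp only [map_sum, mderiv_monomial]

/-- The value of the linear form with coefficient list `r` at the sequence `x`. -/
def linForm {K : Type*} [Semiring K] : List ℕ → (ℕ → K) → K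
  | [], _ => 0
  | a :: r, x => a * x 0 + linForm r fun i => x (i + 1)

theorem linForm_map {K α : Type*} [Semiring K] (l : List α) (w : α → ℕ) (x : ℕ → K) :
    linForm (l.map w) x = ∑ j : Fin l.length, (w l[j] : K) * x j := by
  induction l generalizing x with
  | nil => simp [linForm]
  | cons e l ih => simp [linForm, ih, Fin.sum_univ_succ]

/-- Split off the first row whose leading entry is nonzero modulo `p`. -/
def extractPivot (p : ℕ) : List (List ℕ) → Option ((ℕ × List ℕ) × List (List ℕ))
  | [] => none
  | [] :: _ => none
  | (a :: r) :: rs =>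
    match a % p with
    | 0 => (extractPivot p rs).map fun q => (q.1, (a :: r) :: q.2)
    | _ + 1 => some ((a, r), rs)

/-- Eliminate the leading entry of a row modulo `p`, using the pivot row `a :: b`. -/
def reduceRow (p a : ℕ) (b : List ℕ) : List ℕ → List ℕ
  | [] => []
  | c :: r => List.zipWith (fun u v => (a * v + (p - c % p) * u) % p) b r

/-- Gaussian elimination modulo `p`: whether the rows, of length `n`, have rank `n`. -/
def hasFullColumnRank (p : ℕ) : ℕ → List (List ℕ) → Bool
  | 0, _ => true
  | n + 1, rows =>
    match extractPivot p rows with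
    | none => false
    | some q => hasFullColumnRank p n (q.2.map (reduceRow p q.1.1 q.1.2))

theorem extractPivot_spec {p : ℕ} {rows : List (List ℕ)} {q : (ℕ × List ℕ) × List (List ℕ)}
    (h : extractPivot p rows = some q) :
    q.1.1 :: q.1.2 ∈ rows ∧ q.1.1 % p ≠ 0 ∧ ∀ r ∈ q.2, r ∈ rows := by
  induction rows generalizing q with
  | nil => simp [extractPivot] at h
  | cons row rows ih =>
    rcases row with _ | ⟨a, r⟩
    · simp [extractPivot] at h
    · rw [extractPivot] at h
      split at h
      · obtain ⟨q', hq', rfl⟩ := Option.map_eq_some_iff.1 h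
        obtain ⟨h1, h2, h3⟩ := ih hq'
        refine ⟨List.mem_cons_of_mem _ h1, h2, fun r hr => ?_⟩
        rcases List.mem_cons.1 hr with rfl | hr
        · exact List.mem_cons_self
        · exact List.mem_cons_of_mem _ (h3 r hr)
      · next ha =>
        obtain rfl := Option.some.inj h
        exact ⟨List.mem_cons_self, by simp [ha], fun r hr => List.mem_cons_of_mem _ hr⟩

theorem linForm_zipWith {p : ℕ} [NeZero p] (a c : ℕ) (b r : List ℕ) (hbr : b.length = r.length)
    (x : ℕ → ZMod p) :
    linForm (List.zipWith (fun u v => (a * v + (p - c % p) * u) % p) b r) x =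
      a * linForm r x - c * linForm b x := by
  induction b generalizing r x with
  | nil =>
    obtain rfl := List.length_eq_zero_iff.1 hbr.symm
    simp [linForm]
  | cons u b ih =>
    rcases r with _ | ⟨v, r⟩
    · simp at hbr
    · have hc : ((p - c % p : ℕ) : ZMod p) = -c := by
        rw [Nat.cast_sub (Nat.mod_lt _ (NeZero.pos p)).le]
        simp
      rw [List.zipWith_cons_cons, linForm, linForm, linForm, ih r (by simpa using hbr),
        ZMod.natCast_mod, Nat.cast_add, Nat.cast_mul, Nat.cast_mul, hc]
      ring

theorem eq_zero_of_hasFullColumnRank {p : ℕ} [Fact p.Prime] {n : ℕ} {rows : List (List ℕ)}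
    (h : hasFullColumnRank p n rows = true) (hlen : ∀ r ∈ rows, r.length = n) (x : ℕ → ZMod p)
    (hx : ∀ r ∈ rows, linForm r x = 0) (i : ℕ) (hi : i < n) : x i = 0 := by
  induction n generalizing rows x i with
  | zero => omega
  | succ n ih =>
    rw [hasFullColumnRank] at h
    split at h
    · simp at h
    next q hq =>
    obtain ⟨hmem, hne, hrest⟩ := extractPivot_spec hq
    have hb : q.1.2.length = n := by simpa using hlen _ hmem
    have tail (j : ℕ) (hj : j < n) : x (j + 1) = 0 := by
      refine ih h ?_ (fun j => x (j + 1)) ?_ j hj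
      all_goals
        intro r' hr'
        obtain ⟨r, hr, rfl⟩ := List.mem_map.1 hr'
        have hr2 := hlen _ (hrest r hr)
        rcases r with _ | ⟨c, r⟩
        · simp at hr2
      · simp at hr2
        simp [reduceRow, hb, hr2]
      · have e1 := hx _ hmem
        have e2 := hx _ (hrest _ hr)
        rw [linForm] at e1 e2
        rw [reduceRow, linForm_zipWith _ _ _ _ (by simp at hr2; omega)]
        linear_combination (q.1.1 : ZMod p) * e2 - (c : ZMod p) * e1
    rcases i with _ | i
    · have e := hx _ hmem
      have hzero (l : List ℕ) (y : ℕ → ZMod p) (hy : ∀ j < l.length, y j = 0) :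
          linForm l y = 0 := by
        induction l generalizing y with
        | nil => rfl
        | cons a l ihl =>
          rw [linForm, hy 0 (by simp), ihl _ fun j hj => hy (j + 1) (by simpa using hj)]
          simp
      rw [linForm, hzero _ _ fun j hj => tail j (hb ▸ hj), add_zero] at e
      refine (mul_eq_zero.1 e).resolve_left fun h0 => hne ?_
      exact Nat.mod_eq_zero_of_dvd ((ZMod.natCast_eq_zero_iff _ _).1 h0)
    · exact tail i (by omega)

theorem Matrix.mulVec_injective_of_zmod {p : ℕ} [Fact p.Prime] {K κ ι : Type*} [Field K]
    [CharZero K] [Fintype κ] [Fintype ι] [DecidableEq κ] [DecidableEq ι] (A : Matrix κ ι ℕ)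
    (h : Function.Injective (A.map (Nat.cast : ℕ → ZMod p)).mulVec) :
    Function.Injective (A.map (Nat.cast : ℕ → K)).mulVec := by
  obtain ⟨L, hL⟩ := Matrix.exists_mul_eq_one_of_mulVec_injective _ h
  let L' : Matrix ι κ ℤ := L.map fun a => (a.val : ℤ)
  let A' : Matrix κ ι ℤ := A.map Nat.cast
  have hp : (L' * A').map (Int.cast : ℤ → ZMod p) = 1 := by
    rw [← hL]
    ext i j
    simp [L', A', Matrix.mul_apply]
  have hdet : (L' * A').det ≠ 0 := by
    intro h0
    have := (Int.castRingHom (ZMod p)).map_det (L' * A')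
    rw [h0, RingHom.mapMatrix_apply, Int.coe_castRingHom, hp] at this
    simp at this
  refine Matrix.mulVec_injective_of_det_mul_ne_zero (L'.map (Int.cast : ℤ → K)) _ ?_
  have hK : L'.map (Int.cast : ℤ → K) * A.map (Nat.cast : ℕ → K) =
      (Int.castRingHom K).mapMatrix (L' * A') := by
    ext i j
    simp [L', A', Matrix.mul_apply]
  rw [hK, ← RingHom.map_det]
  simpa using hdet

theorem eq_zero_of_hasFullColumnRank_map {α β K : Type*} [Field K] [CharZero K] (p : ℕ)
    [Fact p.Prime] (l : List α) (t : List β) (w : β → α → ℕ)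
    (h : hasFullColumnRank p l.length (t.map fun s => l.map (w s)) = true) (x : α → K)
    (hx : ∀ s ∈ t, (l.map fun e => (w s e : K) * x e).sum = 0) : ∀ e ∈ l, x e = 0 := by
  classical
  let A : Matrix (Fin t.length) (Fin l.length) ℕ := fun i j => w t[i] l[j]
  have hA : Function.Injective (A.map (Nat.cast : ℕ → ZMod p)).mulVec := by
    rw [← Matrix.coe_mulVecLin, ← LinearMap.ker_eq_bot, LinearMap.ker_eq_bot']
    intro y hy
    let y' : ℕ → ZMod p := fun j => if hj : j < l.length then y ⟨j, hj⟩ else 0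
    have hy' : ∀ i < l.length, y' i = 0 := by
      refine eq_zero_of_hasFullColumnRank h (by simp) y' ?_
      intro r hr
      obtain ⟨s, hs, rfl⟩ := List.mem_map.1 hr
      obtain ⟨i, hi, rfl⟩ := List.mem_iff_getElem.1 hs
      rw [linForm_map]
      have hi' := congrFun hy ⟨i, hi⟩
      rw [Matrix.mulVecLin_apply, Matrix.mulVec_apply_eq_sum] at hi'
      rw [← Pi.zero_apply (M := fun _ => ZMod p) (⟨i, hi⟩ : Fin t.length), ← hi']
      refine Finset.sum_congr rfl fun j _ => ?_
      rw [Matrix.map_apply]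
      simp only [y', j.2, dite_true]
      rfl
    ext j
    simpa [y'] using hy' j j.2
  have hx0 : (fun j : Fin l.length => x l[j]) = 0 := by
    refine Matrix.mulVec_injective_of_zmod (K := K) A hA ?_
    rw [Matrix.mulVec_zero]
    ext i
    rw [Matrix.mulVec_apply_eq_sum]
    have hi := hx t[i] (List.getElem_mem _)
    rw [← Fin.sum_univ_fun_getElem l fun e => (w t[i] e : K) * x e] at hi
    exact hi
  intro e he
  obtain ⟨j, hj, rfl⟩ := List.mem_iff_getElem.1 he
  exact congrFun hx0 ⟨j, hj⟩

theorem coeff_eq_zero_of_mderiv_single {f : MvPolynomial (Fin 3) ℂ} {d m : ℕ}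
    (hf : f.IsHomogeneous d) (t : Fin 3)
    (h : ∀ ν : Fin 3 → ℕ, ν 0 + ν 1 + ν 2 < m → eval (Pi.single t 1) (mderiv ν f) = 0)
    (e : Fin 3 →₀ ℕ) (he : d < m + e t) : f.coeff e = 0 := by
  classical
  by_contra hne
  have hdeg {u : Fin 3 →₀ ℕ} (hu : f.coeff u ≠ 0) : u 0 + u 1 + u 2 = d := by
    rw [← hf hu, Finsupp.weight_apply, Finsupp.sum_fintype _ _ (by simp)]
    simp [Fin.sum_univ_three]
  have hd := hdeg hne
  have h0 := h (Function.update e t 0) (by fin_cases t <;> simp at he ⊢ <;> omega)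
  rw [eval_mderiv, Finset.sum_eq_single e] at h0
  · refine mul_ne_zero hne (Finset.prod_ne_zero_iff.2 fun i _ => ?_) h0
    by_cases hi : i = t
    · subst hi
      simp
    · simp [Function.update_of_ne hi, Nat.descFactorial_self, Nat.factorial_ne_zero]
  · intro u hu hue
    rw [mem_support_iff] at hu
    have hud := hdeg hu
    have hex : ∃ i, i ≠ t ∧ u i ≠ e i := by
      by_contra! hall
      refine hue (Finsupp.ext fun i => ?_)
      have h1 (j : Fin 3) : j = t ∨ u j = e j := by
        by_cases hj : j = t
        · exact .inl hj
        · exact .inr (hall j hj)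
      have := h1 0
      have := h1 1
      have := h1 2
      fin_cases t <;> fin_cases i <;> simp at * <;> omega
    obtain ⟨i, hit, hi⟩ := hex
    rw [Finset.prod_eq_zero (Finset.mem_univ i), mul_zero]
    rw [Function.update_of_ne hit, Pi.single_eq_of_ne hit]
    rcases lt_or_gt_of_ne hi with hlt | hgt
    · simp [Nat.descFactorial_eq_zero_iff_lt.2 hlt]
    · rw [zero_pow (by omega), mul_zero]
  · intro he'
    exact absurd (notMem_support_iff.1 he') hne

/-- The exponent of the monomial `x ^ (d - b - c) * y ^ b * z ^ c`, for `e = (b, c)`. -/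
noncomputable def planeExponent (d : ℕ) (e : ℕ × ℕ) : Fin 3 →₀ ℕ :=
  Finsupp.equivFunOnFinite.symm ![d - (e.1 + e.2), e.1, e.2]

@[simp]
theorem planeExponent_zero (d : ℕ) (e : ℕ × ℕ) : planeExponent d e 0 = d - (e.1 + e.2) := rfl

@[simp]
theorem planeExponent_one (d : ℕ) (e : ℕ × ℕ) : planeExponent d e 1 = e.1 := rfl

@[simp]
theorem planeExponent_two (d : ℕ) (e : ℕ × ℕ) : planeExponent d e 2 = e.2 := rfl

theorem planeExponent_injective (d : ℕ) : Function.Injective (planeExponent d) := by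
  intro e e' h
  exact Prod.ext (DFunLike.congr_fun h 1) (DFunLike.congr_fun h 2)

theorem MvPolynomial.IsHomogeneous.eq_sum_planeExponent {f : MvPolynomial (Fin 3) ℂ} {d : ℕ}
    (hf : f.IsHomogeneous d) (S : Finset (ℕ × ℕ))
    (hS : ∀ e : ℕ × ℕ, e.1 + e.2 ≤ d → f.coeff (planeExponent d e) ≠ 0 → e ∈ S) :
    f = ∑ e ∈ S, monomial (planeExponent d e) (f.coeff (planeExponent d e)) := by
  classical
  ext u
  rw [coeff_sum]
  simp only [coeff_monomial]
  by_cases hu : f.coeff u = 0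
  · rw [hu, Finset.sum_eq_zero]
    intro e _
    split_ifs with he
    · rw [he, hu]
    · rfl
  · have hd : u 0 + u 1 + u 2 = d := by
      rw [← hf hu, Finsupp.weight_apply, Finsupp.sum_fintype _ _ (by simp)]
      simp [Fin.sum_univ_three]
    have hue : planeExponent d (u 1, u 2) = u := by
      ext i
      fin_cases i
      · simp
        omega
      · rfl
      · rfl
    rw [Finset.sum_eq_single (u 1, u 2), if_pos hue, hue]
    · intro e _ he
      exact if_neg fun h => he (planeExponent_injective d (h.trans hue.symm))
    · intro hnot
      exact absurd (hS (u 1, u 2) (by simp; omega) (by rwa [hue])) hnot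

/-- The conditions imposed by a multiple point `(P : ω : 1)`, in terms of the coefficients. -/
theorem sum_choose_eq_zero_of_eval_mderiv {f : MvPolynomial (Fin 3) ℂ} {d : ℕ}
    (hf : f.IsHomogeneous d) (S : Finset (ℕ × ℕ))
    (hS : ∀ e : ℕ × ℕ, e.1 + e.2 ≤ d → f.coeff (planeExponent d e) ≠ 0 → e ∈ S)
    (P : ℕ) (ω : ℂ) (i j : ℕ) (h : eval ![(P : ℂ), ω, 1] (mderiv ![0, i, j] f) = 0) :
    ∑ e ∈ S, ((e.1.choose i * e.2.choose j * P ^ (d - (e.1 + e.2)) : ℕ) : ℂ) *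
      f.coeff (planeExponent d e) * ω ^ e.1 = 0 := by
  rw [hf.eq_sum_planeExponent S hS, map_sum, map_sum] at h
  have hfac : ((i.factorial * j.factorial : ℕ) : ℂ) ≠ 0 := by
    exact_mod_cast (Nat.mul_pos i.factorial_pos j.factorial_pos).ne'
  refine (mul_eq_zero.1 ?_).resolve_left hfac
  rw [← mul_zero (ω ^ i), ← h, Finset.mul_sum, Finset.mul_sum]
  refine Finset.sum_congr rfl fun e _ => ?_
  rw [mderiv_monomial, Fin.prod_univ_three]
  simp only [planeExponent_zero, planeExponent_one, planeExponent_two, Matrix.cons_val_zero,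
    Matrix.cons_val_one, Matrix.cons_val, one_pow, mul_one, Nat.sub_zero,
    Nat.choose_zero_right, Nat.descFactorial_eq_factorial_mul_choose]
  rcases lt_or_ge e.1 i with hlt | hle
  · simp [Nat.choose_eq_zero_of_lt hlt]
  · have : ω ^ e.1 = ω ^ i * ω ^ (e.1 - i) := by rw [← pow_add, Nat.add_sub_cancel' hle]
    rw [this]
    push_cast
    ring

theorem sum_I_pow_pow (n : ℕ) :
    ∑ k ∈ Finset.range 4, (Complex.I ^ k) ^ n = if n % 4 = 0 then 4 else 0 := by
  have h4 (k : ℕ) : (Complex.I ^ k) ^ 4 = 1 := by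
    rw [pow_right_comm, Complex.I_pow_four, one_pow]
  have key (k : ℕ) : (Complex.I ^ k) ^ n = (Complex.I ^ k) ^ (n % 4) := by
    conv_lhs => rw [← Nat.div_add_mod n 4, pow_add, pow_mul, h4, one_pow, one_mul]
  have hlt := Nat.mod_lt n (show 0 < 4 by norm_num)
  simp only [key]
  generalize n % 4 = r at *
  interval_cases r <;> simp [Finset.sum_range_succ, Complex.I_pow_three, ← pow_mul]

theorem sum_filter_mod_four_eq_zero {α : Type*} (S : Finset α) (b : α → ℕ) (F : α → ℂ)
    (h : ∀ k < 4, ∑ e ∈ S, F e * (Complex.I ^ k) ^ b e = 0) (s : ℕ) (hs : s < 4) :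
    ∑ e ∈ S with b e % 4 = s, F e = 0 := by
  have h1 : ∑ k ∈ Finset.range 4,
      (Complex.I ^ k) ^ (4 - s) * ∑ e ∈ S, F e * (Complex.I ^ k) ^ b e = 0 :=
    Finset.sum_eq_zero fun k hk => by rw [h k (Finset.mem_range.1 hk), mul_zero]
  simp only [Finset.mul_sum] at h1
  rw [Finset.sum_comm] at h1
  have h2 (e : α) : ∑ k ∈ Finset.range 4, (Complex.I ^ k) ^ (4 - s) * (F e * (Complex.I ^ k) ^ b e)
      = 4 * if b e % 4 = s then F e else 0 := by
    have : ∀ k ∈ Finset.range 4, (Complex.I ^ k) ^ (4 - s) * (F e * (Complex.I ^ k) ^ b e) =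
        F e * (Complex.I ^ k) ^ (b e + (4 - s)) := fun k _ => by ring
    rw [Finset.sum_congr rfl this, ← Finset.mul_sum, sum_I_pow_pow]
    have hiff : (b e + (4 - s)) % 4 = 0 ↔ b e % 4 = s := by omega
    simp only [hiff]
    split_ifs <;> ring
  simp only [h2, ← Finset.mul_sum, ← Finset.sum_filter] at h1
  exact (mul_eq_zero.1 h1).resolve_left (by norm_num)

theorem eq_zero_of_mem_linSys_ten {p : Fin 4 → Fin 3 → ℂ}
    (hp : p = ![![1, 1, 1], Pi.single 0 1, Pi.single 1 1, Pi.single 2 1])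
    {f : MvPolynomial (Fin 3) ℂ} (hf : f ∈ linSys p 10 (qh 3 2))
    (h : ∀ e ∈ [(4, 2), (2, 4), (4, 4)], f.coeff (planeExponent 10 e) = 0) : f = 0 := by
  obtain ⟨hom, hv⟩ := mem_linSys.1 hf
  let l : List (ℕ × ℕ) := [(3, 3), (4, 3), (3, 4)]
  have hS (e : ℕ × ℕ) (he : e.1 + e.2 ≤ 10) (hne : f.coeff (planeExponent 10 e) ≠ 0) :
      e ∈ l.toFinset := by
    have hlow (t : Fin 3) (v : Fin 4) (hpv : p v = Pi.single t 1) (hm : qh 3 2 v = 6) :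
        planeExponent 10 e t ≤ 4 := by
      by_contra! hlt
      refine hne (coeff_eq_zero_of_mderiv_single hom t (hpv ▸ hv v) _ ?_)
      omega
    have h0 := hlow 0 1 (by rw [hp]; rfl) rfl
    have h1 := hlow 1 2 (by rw [hp]; rfl) rfl
    have h2 := hlow 2 3 (by rw [hp]; rfl) rfl
    have hne' : e ∉ [(4, 2), (2, 4), (4, 4)] := fun hmem => hne (h e hmem)
    obtain ⟨b, c⟩ := e
    simp only [planeExponent_zero, planeExponent_one, planeExponent_two] at h0 h1 h2
    simp [l] at hne' ⊢
    omega
  have hzero : ∀ e ∈ l, f.coeff (planeExponent 10 e) = 0 := by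
    have : Fact (Nat.Prime 101) := ⟨by norm_num⟩
    refine eq_zero_of_hasFullColumnRank_map 101 l [(0, 0), (1, 0), (0, 1)]
      (fun ν e => e.1.choose ν.1 * e.2.choose ν.2) (by decide +kernel) _ ?_
    intro ν hν
    have hν' : ν.1 + ν.2 < 2 := by
      revert ν
      decide
    have := sum_choose_eq_zero_of_eval_mderiv hom l.toFinset hS 1 1 ν.1 ν.2 (by
      have := hv 0 ![0, ν.1, ν.2] (by simpa [qh] using hν')
      rw [hp] at this
      simpa using this)
    rw [List.sum_toFinset _ (by decide)] at this
    simpa using this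
  rw [hom.eq_sum_planeExponent l.toFinset hS]
  refine Finset.sum_eq_zero fun e he => ?_
  rw [hzero e (List.mem_toFinset.1 he), monomial_zero]

/-- The pairs `(b, c)` with `b ≡ s` modulo `4`, except for `(8, 0)`, such that the monomial
`x ^ (24 - b - c) * y ^ b * z ^ c` has multiplicity at least `16` at `(0 : 0 : 1)`
and at least `6` at `(1 : 0 : 0)`. -/
def residueExponents (s : ℕ) : List (ℕ × ℕ) :=
  (List.range 9).flatMap fun c =>
    ((List.range (25 - c)).filter fun b => b % 4 = s ∧ 6 ≤ b + c ∧ (b, c) ≠ (8, 0)).map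
      fun b => (b, c)

/-- The triples `(i, j, P)` with `i + j < 6` and `P = 1, 2`: the orders of differentiation in `y`
and `z`, and the `x`-coordinate of the points at which the derivatives vanish. -/
def doubledOrders : List (ℕ × ℕ × ℕ) :=
  (List.range 6).flatMap fun i =>
    (List.range (6 - i)).flatMap fun j => [(i, j, 1), (i, j, 2)]

/-- The coefficient of the unknown indexed by `e` in the condition indexed by `v`. -/
def doubledWeight (v : ℕ × ℕ × ℕ) (e : ℕ × ℕ) : ℕ :=
  e.1.choose v.1 * e.2.choose v.2.1 * v.2.2 ^ (24 - (e.1 + e.2))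

theorem hasFullColumnRank_residueExponents (s : ℕ) (hs : s < 4) :
    hasFullColumnRank 101 (residueExponents s).length
      (doubledOrders.map fun v => (residueExponents s).map (doubledWeight v)) = true := by
  interval_cases s <;> decide +kernel

theorem mem_residueExponents {s : ℕ} {e : ℕ × ℕ} :
    e ∈ residueExponents s ↔
      e.2 ≤ 8 ∧ e.1 + e.2 ≤ 24 ∧ 6 ≤ e.1 + e.2 ∧ e ≠ (8, 0) ∧ e.1 % 4 = s := by
  obtain ⟨b, c⟩ := e
  simp only [residueExponents, List.mem_flatMap, List.mem_map, List.mem_filter, List.mem_range,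
    decide_eq_true_eq, Prod.mk.injEq]
  constructor
  · rintro ⟨c, hc, b, ⟨hb, h1, h2, h3⟩, rfl, rfl⟩
    exact ⟨by omega, by omega, h2, h3, h1⟩
  · rintro ⟨hc, h1, h2, h3, h4⟩
    exact ⟨c, by omega, b, ⟨by omega, h4, h2, h3⟩, rfl, rfl⟩

theorem eq_zero_of_mem_linSys_twentyFour {p : Fin 10 → Fin 3 → ℂ}
    (hp₀ : p 0 = Pi.single 2 1) (hp₉ : p 9 = Pi.single 0 1)
    (hp : ∀ P ∈ [1, 2], ∀ k < 4, ∃ i, qh 9 16 i = 6 ∧ p i = ![((P : ℕ) : ℂ), Complex.I ^ k, 1])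
    {f : MvPolynomial (Fin 3) ℂ} (hf : f ∈ linSys p 24 (qh 9 16))
    (h : f.coeff (planeExponent 24 (8, 0)) = 0) : f = 0 := by
  obtain ⟨hom, hv⟩ := mem_linSys.1 hf
  let S : Finset (ℕ × ℕ) := {e ∈ Finset.range 25 ×ˢ Finset.range 25 |
    e.2 ≤ 8 ∧ e.1 + e.2 ≤ 24 ∧ 6 ≤ e.1 + e.2 ∧ e ≠ (8, 0)}
  have mem_S (e : ℕ × ℕ) :
      e ∈ S ↔ e.2 ≤ 8 ∧ e.1 + e.2 ≤ 24 ∧ 6 ≤ e.1 + e.2 ∧ e ≠ (8, 0) := by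
    simp only [S, Finset.mem_filter, Finset.mem_product, Finset.mem_range, and_iff_right_iff_imp]
    omega
  have hS (e : ℕ × ℕ) (he : e.1 + e.2 ≤ 24) (hne : f.coeff (planeExponent 24 e) ≠ 0) : e ∈ S := by
    have h2 : planeExponent 24 e 2 ≤ 8 := by
      by_contra! hlt
      refine hne (coeff_eq_zero_of_mderiv_single (m := 16) hom 2 (hp₀ ▸ hv 0) _ ?_)
      omega
    have h0 : planeExponent 24 e 0 ≤ 18 := by
      by_contra! hlt
      refine hne (coeff_eq_zero_of_mderiv_single (m := 6) hom 0 (hp₉ ▸ hv 9) _ ?_)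
      omega
    rw [planeExponent_two] at h2
    rw [planeExponent_zero] at h0
    refine (mem_S e).2 ⟨h2, he, by omega, ?_⟩
    rintro rfl
    exact hne h
  have hfilter (s : ℕ) : {e ∈ S | e.1 % 4 = s} = (residueExponents s).toFinset := by
    ext e
    rw [Finset.mem_filter, mem_S, List.mem_toFinset, mem_residueExponents]
    tauto
  have hzero (s : ℕ) (hs : s < 4) :
      ∀ e ∈ residueExponents s, f.coeff (planeExponent 24 e) = 0 := by
    have : Fact (Nat.Prime 101) := ⟨by norm_num⟩
    refine eq_zero_of_hasFullColumnRank_map 101 _ doubledOrders doubledWeight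
      (hasFullColumnRank_residueExponents s hs) _ ?_
    rintro ⟨i, j, P⟩ hν
    have hν' : i + j < 6 ∧ P ∈ [1, 2] := by
      simp only [doubledOrders, List.mem_flatMap, List.mem_range] at hν
      obtain ⟨i', hi', j', hj', hν⟩ := hν
      simp at hν
      simp
      omega
    have hnodup : (residueExponents s).Nodup := by
      clear hfilter
      interval_cases s <;> decide +kernel
    rw [← List.sum_toFinset _ hnodup, ← hfilter]
    refine sum_filter_mod_four_eq_zero S Prod.fst _ (fun k hk => ?_) s hs
    obtain ⟨v, hmv, hpv⟩ := hp P hν'.2 k hk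
    refine sum_choose_eq_zero_of_eval_mderiv hom S hS P (Complex.I ^ k) i j ?_
    rw [← hpv]
    exact hv v ![0, i, j] (by simpa [hmv] using hν'.1)
  rw [hom.eq_sum_planeExponent S hS]
  refine Finset.sum_eq_zero fun e he => ?_
  rw [hzero (e.1 % 4) (Nat.mod_lt _ (by norm_num)) e, monomial_zero]
  have := (mem_S e).1 he
  exact mem_residueExponents.2 ⟨this.1, this.2.1, this.2.2.1, this.2.2.2, rfl⟩

theorem exists_mem_linSys_ne_zero {k : ℕ} {p : Fin k → Fin 3 → ℂ} {d : ℕ} {m : Fin k → ℕ}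
    (h : 0 < Module.finrank ℂ (linSys p d m)) : ∃ f ∈ linSys p d m, f ≠ 0 :=
  (Submodule.ne_bot_iff _).1 fun hbot => by
    rw [hbot, finrank_bot] at h
    exact h.ne rfl

theorem finrank_linSys_le_of_mul {k : ℕ} {p : Fin k → Fin 3 → ℂ} {d e : ℕ} {m n : Fin k → ℕ}
    {f : MvPolynomial (Fin 3) ℂ} (hf : f ∈ linSys p d m) (h0 : f ≠ 0) :
    Module.finrank ℂ (linSys p e n) ≤ Module.finrank ℂ (linSys p (d + e) (m + n)) := by
  let T : linSys p e n →ₗ[ℂ] linSys p (d + e) (m + n) :=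
    ((LinearMap.mulLeft ℂ f).restrict fun _ hg => mul_mem_linSys hf hg)
  refine LinearMap.finrank_le_finrank_of_injective (f := T) fun g g' hgg' => Subtype.ext ?_
  exact mul_left_cancel₀ h0 (congrArg Subtype.val hgg')

theorem le_finrank_linSys {k : ℕ} (p : Fin k → Fin 3 → ℂ) {d : ℕ} {m : Fin k → ℕ} {r : ℕ}
    (hm : ∀ i, m i ≤ d + 1) (h : r + ∑ i, (topIndices (m i)).card ≤ (d + 2).choose d) :
    r ≤ Module.finrank ℂ (linSys p d m) := by
  have h1 := finrank_linSys_ge p d m hm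
  rw [Nat.multichoose_eq, show 3 + d - 1 = d + 2 by omega] at h1
  omega

theorem three_le_finrank_linSys_ten (p : Fin 4 → Fin 3 → ℂ) :
    3 ≤ Module.finrank ℂ (linSys p 10 (qh 3 2)) := by
  have hcubic : 0 < Module.finrank ℂ (linSys p 3 ![0, 2, 2, 2]) :=
    le_finrank_linSys p (by decide) (by decide +kernel)
  have hquartic : 3 ≤ Module.finrank ℂ (linSys p 4 ![2, 2, 2, 2]) :=
    le_finrank_linSys p (by decide) (by decide +kernel)
  obtain ⟨c, hc, hc0⟩ := exists_mem_linSys_ne_zero hcubic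
  have h := hquartic.trans (finrank_linSys_le_of_mul (mul_mem_linSys hc hc) (mul_ne_zero hc0 hc0))
  have hm : (![0, 2, 2, 2] + ![0, 2, 2, 2] + ![2, 2, 2, 2] : Fin 4 → ℕ) = qh 3 2 := by decide
  rwa [hm] at h

theorem one_le_finrank_linSys_twentyFour (p : Fin 10 → Fin 3 → ℂ) :
    1 ≤ Module.finrank ℂ (linSys p 24 (qh 9 16)) := by
  let m : Fin 10 → ℕ := fun i => if i = 0 then 8 else 3
  have hpos : 0 < Module.finrank ℂ (linSys p 12 m) :=
    le_finrank_linSys p (by decide) (by decide +kernel)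
  obtain ⟨c, hc, hc0⟩ := exists_mem_linSys_ne_zero hpos
  have h : 1 ≤ _ := hpos.trans_le (finrank_linSys_le_of_mul hc hc0)
  have hm : m + m = qh 9 16 := by decide
  rwa [hm] at h

theorem generically_finrank_linSys_ten_le :
    Generically 4 fun p => Module.finrank ℂ (linSys p 10 (qh 3 2)) ≤ 3 := by
  refine generically_finrank_linSys_le 10 _ 3 _
    (LinearMap.pi fun s => lcoeff ℂ (planeExponent 10 (![(4, 2), (2, 4), (4, 4)] s)))
    fun f hf h => eq_zero_of_mem_linSys_ten rfl hf fun e he => ?_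
  simp only [List.mem_cons, List.not_mem_nil, or_false] at he
  rcases he with rfl | rfl | rfl
  · exact congrFun h 0
  · exact congrFun h 1
  · exact congrFun h 2

theorem generically_finrank_linSys_twentyFour_le :
    Generically 10 fun p => Module.finrank ℂ (linSys p 24 (qh 9 16)) ≤ 1 := by
  let p₀ : Fin 10 → Fin 3 → ℂ := ![Pi.single 2 1,
    ![(1 : ℕ), Complex.I ^ 0, 1], ![(1 : ℕ), Complex.I ^ 1, 1],
    ![(1 : ℕ), Complex.I ^ 2, 1], ![(1 : ℕ), Complex.I ^ 3, 1],
    ![(2 : ℕ), Complex.I ^ 0, 1], ![(2 : ℕ), Complex.I ^ 1, 1],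
    ![(2 : ℕ), Complex.I ^ 2, 1], ![(2 : ℕ), Complex.I ^ 3, 1], Pi.single 0 1]
  refine generically_finrank_linSys_le 24 _ 1 p₀
    (LinearMap.pi fun _ => lcoeff ℂ (planeExponent 24 (8, 0)))
    fun f hf h => eq_zero_of_mem_linSys_twentyFour rfl rfl ?_ hf (congrFun h 0)
  intro P hP k hk
  simp only [List.mem_cons, List.not_mem_nil, or_false] at hP
  rcases hP with rfl | rfl <;> interval_cases k
  exacts [⟨1, rfl, rfl⟩, ⟨2, rfl, rfl⟩, ⟨3, rfl, rfl⟩, ⟨4, rfl, rfl⟩,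
    ⟨5, rfl, rfl⟩, ⟨6, rfl, rfl⟩, ⟨7, rfl, rfl⟩, ⟨8, rfl, rfl⟩]

theorem special_L_10_2_and_24_16 :
    virtDim 10 (qh 3 2) = -1 ∧
    virtDim 24 (qh 9 16) = -1 ∧
    Generically 4 (fun p =>
      projDim p 10 (qh 3 2) = 2 ∧
      projDim p 10 (qh 3 2) > max (-1) (virtDim 10 (qh 3 2))) ∧
    Generically 10 (fun p =>
      projDim p 24 (qh 9 16) = 0 ∧
      projDim p 24 (qh 9 16) > max (-1) (virtDim 24 (qh 9 16))) := by
  have hv₁ : virtDim 10 (qh 3 2) = -1 := by decide +kernel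
  have hv₂ : virtDim 24 (qh 9 16) = -1 := by decide +kernel
  refine ⟨hv₁, hv₂, generically_finrank_linSys_ten_le.mono fun p hp => ?_,
    generically_finrank_linSys_twentyFour_le.mono fun p hp => ?_⟩
  · have hdim : projDim p 10 (qh 3 2) = 2 := by
      rw [projDim, le_antisymm hp (three_le_finrank_linSys_ten p)]
      norm_num
    rw [hv₁, hdim]
    norm_num
  · have hdim : projDim p 24 (qh 9 16) = 0 := by
      rw [projDim, le_antisymm hp (one_le_finrank_linSys_twentyFour p)]
      norm_num
    rw [hv₂, hdim]
    norm_num
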